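/- Let m ≥ 1 and A = A_{2m}(x,y). Then the Cartan matrix of A is given by dim_k e₁Ae₁ = F_{2m−1}(y, Sx), dim_k e₁Ae₂ = F_{2m}(y, Sx), dim_k e₂Ae₁ = F_{2m}(x, y), and dim_k e₂Ae₂ = F_{2m+1}(x, y). -/

import Mathlib

/-!
The nonzero paths form a basis of `A = A_n(x,y)`.  Order the blocks of arrows as
`α_{1,*} < β_{1,*} < α_{2,*} < β_{2,*} < ⋯`.  The relations say precisely that a composable product
of two arrows (written in composition order) is nonzero only if the block increases strictly from
left to right.  So the nonzero paths are the strictly increasing words that alternate between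
`α`s and `β`s.

They span, because right multiplication by a generator maps a path to a path or to zero
(`pathSpan_mul`).  They are linearly independent, because right multiplication by the generators can
be defined on the vector space of formal words, where it satisfies the defining relations
(`wordAct_rel`), and in the resulting representation a path sends the empty word to itself
(`wordRep_pathVal`).  Hence `e_i A e_j` has dimension the number of paths from `j` to `i`
(`finrank_cornerSpace`).

For the count, fix the vertex `i` at which the paths end, and let `N_s` be the number of them whose
first-traversed arrow has rank (position of its block) at most `s` and of the parity of `s`.  Either
that arrow has rank at most `s - 2`, or it has rank exactly `s` and deleting it leaves a path counted
by `N_{s-1}`.  This is the Fibonacci recursion (`ncard_pathWords_add_two`).  For paths ending at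
vertex `1` the block `α_{1,*}` never occurs, so the sequence of block sizes `x₁, y₁, x₂, y₂, …` is
replaced by `y₁, x₂, y₂, …`, which gives the arguments `(y, Sx)`.
-/

/-!
Statement 8: the Cartan matrix of `A = A_{2m}(x,y)` (`m ≥ 1`):
`dim e₁Ae₁ = F_{2m-1}(y,Sx)`, `dim e₁Ae₂ = F_{2m}(y,Sx)`, `dim e₂Ae₁ = F_{2m}(x,y)`
and `dim e₂Ae₂ = F_{2m+1}(x,y)`, where the `F_p` are the generalized Fibonacci numbers
and `Sx` is the shifted sequence.
-/

noncomputable section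
set_option linter.unusedSectionVars false

/-- The generators of the path algebra of the quiver of `A_n(x,y)`: trivial paths `e₁`, `e₂`,
arrows `a i j = α_{i+1,j+1} : 1 → 2` for `i < ⌊(n+1)/2⌋`, `j < x_{i+1}`, and arrows
`b i j = β_{i+1,j+1} : 2 → 1` for `i < ⌊n/2⌋`, `j < y_{i+1}`.  (The sequences of positive
integers `x = (x₁, x₂, …)` and `y = (y₁, y₂, …)` are encoded as functions `ℕ → ℕ` with
`x i = x_{i+1}` and `y i = y_{i+1}`.) -/
inductive AGen (x y : ℕ → ℕ) (n : ℕ) : Type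
  | e1 : AGen x y n
  | e2 : AGen x y n
  | a (i : Fin ((n + 1) / 2)) (j : Fin (x i)) : AGen x y n
  | b (i : Fin (n / 2)) (j : Fin (y i)) : AGen x y n

/-- The relations defining `A_n(x,y)` as a quotient of the free algebra on `AGen x y n`:
the path algebra relations (products are written in composition order: `u * v` means
"first traverse `v`, then `u`") together with the relations `α_{i,j} β_{i',j'} = 0`
(i.e. `a i j * b i' j' = 0`) for `i' < i`, and `β_{i',j'} α_{i,j} = 0`
(i.e. `b i' j' * a i j = 0`) for `i ≤ i'`. -/
inductive ARel (k : Type) [Field k] (x y : ℕ → ℕ) (n : ℕ) :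
    FreeAlgebra k (AGen x y n) → FreeAlgebra k (AGen x y n) → Prop
  | idem1 : ARel k x y n (FreeAlgebra.ι k AGen.e1 * FreeAlgebra.ι k AGen.e1)
      (FreeAlgebra.ι k AGen.e1)
  | idem2 : ARel k x y n (FreeAlgebra.ι k AGen.e2 * FreeAlgebra.ι k AGen.e2)
      (FreeAlgebra.ι k AGen.e2)
  | orth12 : ARel k x y n (FreeAlgebra.ι k AGen.e1 * FreeAlgebra.ι k AGen.e2) 0
  | orth21 : ARel k x y n (FreeAlgebra.ι k AGen.e2 * FreeAlgebra.ι k AGen.e1) 0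
  | sum : ARel k x y n (FreeAlgebra.ι k AGen.e1 + FreeAlgebra.ι k AGen.e2) 1
  | a_tgt (i) (j) : ARel k x y n (FreeAlgebra.ι k AGen.e2 * FreeAlgebra.ι k (AGen.a i j))
      (FreeAlgebra.ι k (AGen.a i j))
  | a_src (i) (j) : ARel k x y n (FreeAlgebra.ι k (AGen.a i j) * FreeAlgebra.ι k AGen.e1)
      (FreeAlgebra.ι k (AGen.a i j))
  | b_tgt (i) (j) : ARel k x y n (FreeAlgebra.ι k AGen.e1 * FreeAlgebra.ι k (AGen.b i j))
      (FreeAlgebra.ι k (AGen.b i j))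
  | b_src (i) (j) : ARel k x y n (FreeAlgebra.ι k (AGen.b i j) * FreeAlgebra.ι k AGen.e2)
      (FreeAlgebra.ι k (AGen.b i j))
  | ab (i : Fin ((n + 1) / 2)) (j : Fin (x i)) (i' : Fin (n / 2)) (j' : Fin (y i'))
      (h : (i' : ℕ) < (i : ℕ)) :
      ARel k x y n (FreeAlgebra.ι k (AGen.a i j) * FreeAlgebra.ι k (AGen.b i' j')) 0
  | ba (i : Fin ((n + 1) / 2)) (j : Fin (x i)) (i' : Fin (n / 2)) (j' : Fin (y i'))
      (h : (i : ℕ) ≤ (i' : ℕ)) :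
      ARel k x y n (FreeAlgebra.ι k (AGen.b i' j') * FreeAlgebra.ι k (AGen.a i j)) 0

/-- The algebra `A_n(x,y)`. -/
def AAlgebra (k : Type) [Field k] (x y : ℕ → ℕ) (n : ℕ) : Type := RingQuot (ARel k x y n)

instance (k : Type) [Field k] (x y : ℕ → ℕ) (n : ℕ) : Ring (AAlgebra k x y n) :=
  inferInstanceAs (Ring (RingQuot (ARel k x y n)))

instance (k : Type) [Field k] (x y : ℕ → ℕ) (n : ℕ) : Algebra k (AAlgebra k x y n) :=
  inferInstanceAs (Algebra k (RingQuot (ARel k x y n)))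

variable (k : Type) [Field k] (x y : ℕ → ℕ) (n : ℕ)

/-- The idempotent `e₁ ∈ A_n(x,y)`. -/
def Ae1 : AAlgebra k x y n := RingQuot.mkAlgHom k (ARel k x y n) (FreeAlgebra.ι k AGen.e1)

/-- The idempotent `e₂ ∈ A_n(x,y)`. -/
def Ae2 : AAlgebra k x y n := RingQuot.mkAlgHom k (ARel k x y n) (FreeAlgebra.ι k AGen.e2)

/-- The arrow `α_{i+1,j+1} ∈ A_n(x,y)`. -/
def Aalpha (i : Fin ((n + 1) / 2)) (j : Fin (x i)) : AAlgebra k x y n :=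
  RingQuot.mkAlgHom k (ARel k x y n) (FreeAlgebra.ι k (AGen.a i j))

/-- The arrow `β_{i+1,j+1} ∈ A_n(x,y)`. -/
def Abeta (i : Fin (n / 2)) (j : Fin (y i)) : AAlgebra k x y n :=
  RingQuot.mkAlgHom k (ARel k x y n) (FreeAlgebra.ι k (AGen.b i j))
/-- The generalized Fibonacci numbers `F_p(x,y)`:  `F₀ = 0`, `F₁ = 1`,
`F_{2m} = F_{2m-2} + F_{2m-1}·x_m` and `F_{2m+1} = F_{2m-1} + F_{2m}·y_m` (`m ≥ 1`);
the sequences are encoded as functions `ℕ → ℕ` with `x i = x_{i+1}`, `y i = y_{i+1}`. -/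
def genFib (x y : ℕ → ℕ) : ℕ → ℕ
  | 0 => 0
  | 1 => 1
  | n + 2 =>
    if n % 2 = 0 then genFib x y n + genFib x y (n + 1) * x (n / 2)
    else genFib x y n + genFib x y (n + 1) * y (n / 2)

/-- The shift `Sx = (x₂, x₃, …)` of a sequence `x = (x₁, x₂, …)`. -/
def shiftSeq (x : ℕ → ℕ) : ℕ → ℕ := fun i => x (i + 1)

/-- The `k`-subspace `e_i A e_j` of an algebra `A` (whose dimensions are the entries of
the Cartan matrix). -/
def cornerSpace (k : Type) {A : Type} [Field k] [Ring A] [Algebra k A] (u v : A) : Submodule k A :=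
  LinearMap.range ((LinearMap.mulLeft k u).comp (LinearMap.mulRight k v))

section CartanProof

variable {k x y n}

/-! ### Words in the arrows -/

/-- The rank of a generator, in the linear order
`α_{1,*} < β_{1,*} < α_{2,*} < β_{2,*} < ⋯` of blocks of arrows (with 0-based indices, `α_i` has rank
`2 * i + 2` and `β_i` has rank `2 * i + 3`).  The parity of the rank records the source vertex: even
for vertex `1`, odd for vertex `2`.  The trivial paths `e₁`, `e₂` get ranks `0`, `1` of the matching
parity, below those of all arrows. -/
def AGen.rank : AGen x y n → ℕ
  | .e1 => 0
  | .e2 => 1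
  | .a i _ => 2 * i + 2
  | .b i _ => 2 * i + 3

/-- The rank of the first-traversed arrow of a path.  A path is encoded as the list of its arrows
with the first-traversed arrow at the head, i.e. the product `u₁ * ⋯ * u_r` is the list
`[u_r, …, u₁]`; the number `t` stands in for the rank when the list is empty, and its parity is that
of the vertex at which all the paths under consideration end. -/
def endRank (t : ℕ) : List (AGen x y n) → ℕ
  | [] => t
  | g :: _ => g.rank

/-- The lists encoding the nonzero paths ending at the vertex with the parity of `t`: read in
composition order, ranks increase strictly and alternate in parity, starting from `t`.  This is the
intended meaning for `t = 1, 2`; from `t = 1` on, no trivial path `e₁`, `e₂` can occur as a letter. -/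
def IsPathWord (t : ℕ) : List (AGen x y n) → Prop
  | [] => True
  | g :: l => IsPathWord t l ∧ endRank t l < g.rank ∧ endRank t l % 2 ≠ g.rank % 2

variable (x y n) in
/-- The nonzero paths whose first-traversed arrow has rank at most `s` and of the parity of `s`. -/
def pathWords (t s : ℕ) : Set (List (AGen x y n)) :=
  {l | IsPathWord t l ∧ endRank t l ≤ s ∧ endRank t l % 2 = s % 2}

lemma le_endRank {t : ℕ} : ∀ {l : List (AGen x y n)}, IsPathWord t l → t ≤ endRank t l
  | [], _ => le_rfl
  | _ :: _, h => (le_endRank h.1).trans h.2.1.le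

lemma pathWords_of_lt {t s : ℕ} (h : s < t) : pathWords x y n t s = ∅ := by
  ext l
  simp only [pathWords, Set.mem_ofPred_eq, Set.mem_empty_iff_false, iff_false]
  rintro ⟨h1, h2, -⟩
  have := le_endRank h1
  omega

lemma pathWords_self (t : ℕ) : pathWords x y n t t = {[]} := by
  ext l
  simp only [pathWords, Set.mem_ofPred_eq, Set.mem_singleton_iff]
  constructor
  · rintro ⟨h1, h2, -⟩
    cases l with
    | nil => rfl
    | cons g l =>
      have := le_endRank h1.1
      have := h1.2.1
      simp only [endRank] at h2
      omega
  · rintro rfl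
    simp [IsPathWord, endRank]

/-- A path in `pathWords t (s + 2)` either already lies in `pathWords t s`, or arises from a path in
`pathWords t (s + 1)` by appending an arrow of rank exactly `s + 2`. -/
lemma pathWords_add_two {t s : ℕ} (h : t ≤ s + 1) :
    pathWords x y n t (s + 2) = pathWords x y n t s ∪
      (fun q : AGen x y n × List (AGen x y n) => q.1 :: q.2) ''
        ({g | g.rank = s + 2} ×ˢ pathWords x y n t (s + 1)) := by
  ext l
  simp only [pathWords, Set.mem_union, Set.mem_ofPred_eq, Set.mem_image, Set.mem_prod, Prod.exists]
  cases l with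
  | nil =>
    simp only [IsPathWord, endRank, true_and, reduceCtorEq, and_false, exists_false, or_false]
    omega
  | cons g l =>
    simp only [IsPathWord, endRank, List.cons.injEq]
    constructor
    · rintro ⟨⟨h1, h2, h3⟩, h4, h5⟩
      by_cases h6 : g.rank = s + 2
      · exact Or.inr ⟨g, l, ⟨h6, h1, by omega, by omega⟩, rfl, rfl⟩
      · exact Or.inl ⟨⟨h1, h2, h3⟩, by omega, by omega⟩
    · rintro (⟨⟨h1, h2, h3⟩, h4, h5⟩ | ⟨g', l', ⟨h6, h1, h2, h3⟩, rfl, rfl⟩)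
      · exact ⟨⟨h1, h2, h3⟩, by omega, by omega⟩
      · exact ⟨⟨h1, by omega, by omega⟩, by omega, by omega⟩

lemma setOf_rank_finite_ncard {m s : ℕ} (hs : s < 2 * m) :
    {g : AGen x y (2 * m) | g.rank = s + 2}.Finite ∧
    {g : AGen x y (2 * m) | g.rank = s + 2}.ncard =
      if s % 2 = 0 then x (s / 2) else y (s / 2) := by
  rcases Nat.even_or_odd' s with ⟨i, rfl | rfl⟩
  · have h : {g : AGen x y (2 * m) | g.rank = 2 * i + 2} =
        Set.range (AGen.a (x := x) (y := y) (n := 2 * m) ⟨i, by omega⟩) := by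
      ext g
      cases g with
      | e1 => simp [AGen.rank]
      | e2 => simp [AGen.rank]
      | a i' j' =>
        simp only [AGen.rank, Set.mem_ofPred_eq, Set.mem_range]
        constructor
        · intro h
          obtain rfl : i = i' := by omega
          exact ⟨j', rfl⟩
        · rintro ⟨j, h⟩
          cases h
          rfl
      | b i' j' => simp [AGen.rank]; omega
    rw [h]
    refine ⟨Set.finite_range _, ?_⟩
    rw [← Set.image_univ, Set.ncard_image_of_injective _ (fun a b h => by cases h; rfl)]
    simp
  · have h : {g : AGen x y (2 * m) | g.rank = 2 * i + 1 + 2} =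
        Set.range (AGen.b (x := x) (y := y) (n := 2 * m) ⟨i, by omega⟩) := by
      ext g
      cases g with
      | e1 => simp [AGen.rank]
      | e2 => simp [AGen.rank]
      | b i' j' =>
        simp only [AGen.rank, Set.mem_ofPred_eq, Set.mem_range]
        constructor
        · intro h
          obtain rfl : i = i' := by omega
          exact ⟨j', rfl⟩
        · rintro ⟨j, h⟩
          cases h
          rfl
      | a i' j' => simp [AGen.rank]; omega
    rw [h]
    refine ⟨Set.finite_range _, ?_⟩
    rw [← Set.image_univ, Set.ncard_image_of_injective _ (fun a b h => by cases h; rfl)]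
    have h1 : (2 * i + 1) % 2 = 1 := by omega
    have h2 : (2 * i + 1) / 2 = i := by omega
    simp [h1, h2]

lemma pathWords_finite {m : ℕ} (t : ℕ) : ∀ s, s ≤ 2 * m + 1 → (pathWords x y (2 * m) t s).Finite := by
  intro s
  induction s using Nat.strong_induction_on with
  | _ s ih =>
    intro hs
    rcases lt_trichotomy s t with h | rfl | h
    · simp [pathWords_of_lt h]
    · simp [pathWords_self]
    · match s, h with
      | 1, h =>
        -- here `t = 0`, and rank `1` would have to be attained by the trivial path `e₂`
        refine ((Set.finite_singleton [AGen.e2])).subset ?_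
        rintro l ⟨h1, h2, h3⟩
        obtain rfl : t = 0 := by omega
        cases l with
        | nil => simp [endRank] at h3
        | cons g l =>
          have hg : g.rank = 1 := by simp only [endRank] at h2 h3; omega
          have hl : l = [] := by
            have : l ∈ pathWords x y (2 * m) 0 0 := by
              have := h1.2
              exact ⟨h1.1, by omega, by omega⟩
            simpa [pathWords_self] using this
          subst hl
          cases g <;> simp [AGen.rank] at hg ⊢
      | s + 2, h =>
        rw [pathWords_add_two (by omega)]
        exact (ih s (by omega) (by omega)).union
          (((setOf_rank_finite_ncard (by omega)).1.prod (ih (s + 1) (by omega) (by omega))).image _)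

lemma ncard_pathWords_add_two {m t s : ℕ} (h : t ≤ s + 1) (hs : s < 2 * m) :
    (pathWords x y (2 * m) t (s + 2)).ncard = (pathWords x y (2 * m) t s).ncard +
      (pathWords x y (2 * m) t (s + 1)).ncard * if s % 2 = 0 then x (s / 2) else y (s / 2) := by
  obtain ⟨hf, hc⟩ := setOf_rank_finite_ncard (x := x) (y := y) hs
  rw [pathWords_add_two h, Set.ncard_union_eq ?_ (pathWords_finite t s (by omega))
    ((hf.prod (pathWords_finite t (s + 1) (by omega))).image _),
    Set.ncard_image_of_injective _ (fun a b h => by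
      simp only [List.cons.injEq] at h; exact Prod.ext h.1 h.2), Set.ncard_prod, hc,
    mul_comm (ite _ _ _)]
  rw [Set.disjoint_left]
  rintro l ⟨-, h1, -⟩ ⟨⟨g, l'⟩, ⟨h2, -⟩, rfl⟩
  simp only [endRank, Set.mem_ofPred_eq] at h1 h2
  omega

lemma ncard_pathWords_one {m : ℕ} : ∀ p, p ≤ 2 * m + 1 →
    (pathWords x y (2 * m) 1 p).ncard = genFib x y p
  | 0, _ => by simp [pathWords_of_lt, genFib]
  | 1, _ => by simp [pathWords_self, genFib]
  | p + 2, h => by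
    rw [ncard_pathWords_add_two (by omega) (by omega), ncard_pathWords_one p (by omega),
      ncard_pathWords_one (p + 1) (by omega), genFib]
    split_ifs <;> rfl

/-- Paths ending at vertex `1` are counted from `t = 2` on; removing the block `α_{1,*}`, which
cannot occur in them, exchanges the roles of `x` and `y` and shifts `x`. -/
lemma ncard_pathWords_two {m : ℕ} : ∀ p, p ≤ 2 * m →
    (pathWords x y (2 * m) 2 (p + 1)).ncard = genFib y (shiftSeq x) p
  | 0, _ => by simp [pathWords_of_lt, genFib]
  | 1, _ => by simp [pathWords_self, genFib]
  | p + 2, h => by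
    rw [ncard_pathWords_add_two (s := p + 1) (by omega) (by omega), ncard_pathWords_two p (by omega),
      ncard_pathWords_two (p + 1) (by omega), genFib]
    rcases Nat.even_or_odd' p with ⟨i, rfl | rfl⟩
    · rw [if_neg (by omega), if_pos (by omega), show (2 * i + 1) / 2 = 2 * i / 2 by omega]
    · rw [if_pos (by omega), if_neg (by omega), shiftSeq,
        show (2 * i + 1 + 1) / 2 = (2 * i + 1) / 2 + 1 by omega]

/-! ### The paths span -/

variable (k) in
/-- The image in `A_n(x,y)` of a generator. -/
def aGen (g : AGen x y n) : AAlgebra k x y n :=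
  RingQuot.mkAlgHom k (ARel k x y n) (FreeAlgebra.ι k g)

variable (k) in
/-- The canonical projection from the free algebra. -/
def aProj : FreeAlgebra k (AGen x y n) →ₐ[k] AAlgebra k x y n :=
  RingQuot.mkAlgHom k (ARel k x y n)

lemma aProj_rel {u v : FreeAlgebra k (AGen x y n)} (h : ARel k x y n u v) :
    aProj k u = aProj k v :=
  RingQuot.mkAlgHom_rel k h

lemma aProj_surjective : Function.Surjective (aProj (x := x) (y := y) (n := n) k) :=
  RingQuot.mkAlgHom_surjective k _

lemma aProj_ι (g : AGen x y n) : aProj k (FreeAlgebra.ι k g) = aGen k g := rfl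

variable (k x y n) in
/-- The trivial path at the vertex encoded by the parity of `s` (even: `e₁`, odd: `e₂`). -/
def aIdem (s : ℕ) : AAlgebra k x y n := aGen k (if s % 2 = 0 then AGen.e1 else AGen.e2)

lemma aIdem_congr {s s' : ℕ} (h : s % 2 = s' % 2) : aIdem k x y n s = aIdem k x y n s' := by
  rw [aIdem, aIdem, h]

lemma aIdem_mul_aIdem (s s' : ℕ) :
    aIdem k x y n s * aIdem k x y n s' = if s % 2 = s' % 2 then aIdem k x y n s else 0 := by
  have h11 := aProj_rel (ARel.idem1 (k := k) (x := x) (y := y) (n := n))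
  have h22 := aProj_rel (ARel.idem2 (k := k) (x := x) (y := y) (n := n))
  have h12 := aProj_rel (ARel.orth12 (k := k) (x := x) (y := y) (n := n))
  have h21 := aProj_rel (ARel.orth21 (k := k) (x := x) (y := y) (n := n))
  simp only [map_mul, map_zero, aProj_ι] at h11 h22 h12 h21
  rcases Nat.mod_two_eq_zero_or_one s with h | h <;>
    rcases Nat.mod_two_eq_zero_or_one s' with h' | h' <;> simp [aIdem, *]

lemma aGen_mul_aIdem_rank {g : AGen x y n} (hg : 2 ≤ g.rank) :
    aGen k g * aIdem k x y n g.rank = aGen k g := by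
  cases g with
  | e1 => simp [AGen.rank] at hg
  | e2 => simp [AGen.rank] at hg
  | a i j =>
    have h := aProj_rel (ARel.a_src (k := k) (x := x) (y := y) (n := n) i j)
    simpa [aProj_ι, aIdem, AGen.rank] using h
  | b i j =>
    have h := aProj_rel (ARel.b_src (k := k) (x := x) (y := y) (n := n) i j)
    have h1 : (2 * (i : ℕ) + 3) % 2 = 1 := by omega
    simpa [aProj_ι, aIdem, AGen.rank, h1] using h

lemma aIdem_rank_mul_aGen {g : AGen x y n} (hg : 2 ≤ g.rank) :
    aIdem k x y n (g.rank + 1) * aGen k g = aGen k g := by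
  cases g with
  | e1 => simp [AGen.rank] at hg
  | e2 => simp [AGen.rank] at hg
  | a i j =>
    have h := aProj_rel (ARel.a_tgt (k := k) (x := x) (y := y) (n := n) i j)
    have h1 : (2 * (i : ℕ) + 2 + 1) % 2 = 1 := by omega
    simpa [aProj_ι, aIdem, AGen.rank, h1] using h
  | b i j =>
    have h := aProj_rel (ARel.b_tgt (k := k) (x := x) (y := y) (n := n) i j)
    have h1 : (2 * (i : ℕ) + 3 + 1) % 2 = 0 := by omega
    simpa [aProj_ι, aIdem, AGen.rank, h1] using h

/-- The quadratic monomial relations, uniformly: a composable product of two arrows vanishes unless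
the rank increases from left to right. -/
lemma aGen_mul_aGen {g h : AGen x y n} (hg : 2 ≤ g.rank) (hh : 2 ≤ h.rank)
    (hp : g.rank % 2 ≠ h.rank % 2) (hle : h.rank ≤ g.rank) : aGen k g * aGen k h = 0 := by
  cases g with
  | e1 => simp [AGen.rank] at hg
  | e2 => simp [AGen.rank] at hg
  | a i j =>
    cases h with
    | e1 => simp [AGen.rank] at hh
    | e2 => simp [AGen.rank] at hh
    | a i' j' => simp only [AGen.rank] at hp; omega
    | b i' j' =>
      simp only [AGen.rank] at hle
      simpa [aProj_ι] using aProj_rel (ARel.ab (k := k) i j i' j' (by omega))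
  | b i j =>
    cases h with
    | e1 => simp [AGen.rank] at hh
    | e2 => simp [AGen.rank] at hh
    | b i' j' => simp only [AGen.rank] at hp; omega
    | a i' j' =>
      simp only [AGen.rank] at hle
      simpa [aProj_ι] using aProj_rel (ARel.ba (k := k) i' j' i j (by omega))

variable (k) in
/-- The element of `A_n(x,y)` represented by a list of arrows, as a path ending at the vertex with
the parity of `t`. -/
def pathVal (t : ℕ) : List (AGen x y n) → AAlgebra k x y n
  | [] => aIdem k x y n t
  | g :: l => pathVal t l * aGen k g

lemma IsPathWord.two_le {t : ℕ} (ht : 1 ≤ t) {g : AGen x y n} {l : List (AGen x y n)}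
    (h : IsPathWord t (g :: l)) : 2 ≤ g.rank := by
  have := le_endRank h.1
  have := h.2.1
  omega

lemma aIdem_mul_pathVal (t : ℕ) :
    ∀ l : List (AGen x y n), aIdem k x y n t * pathVal k t l = pathVal k t l
  | [] => by simp [pathVal, aIdem_mul_aIdem]
  | g :: l => by rw [pathVal, ← mul_assoc, aIdem_mul_pathVal t l]

lemma pathVal_mul_aIdem {t : ℕ} (ht : 1 ≤ t) {l : List (AGen x y n)} (hl : IsPathWord t l) (s : ℕ) :
    pathVal k t l * aIdem k x y n s = if endRank t l % 2 = s % 2 then pathVal k t l else 0 := by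
  cases l with
  | nil => exact aIdem_mul_aIdem t s
  | cons g l =>
    rw [pathVal, ← aGen_mul_aIdem_rank (hl.two_le ht), mul_assoc, mul_assoc, aIdem_mul_aIdem]
    by_cases h : g.rank % 2 = s % 2
    · rw [if_pos h, if_pos (show endRank t (g :: l) % 2 = s % 2 from h)]
    · rw [if_neg h, if_neg (show ¬ endRank t (g :: l) % 2 = s % 2 from h), mul_zero, mul_zero]

/-- The condition `t ≤ 2` makes the empty path composable with every arrow ending at its vertex. -/
lemma pathVal_mul_aGen {t : ℕ} (ht : 1 ≤ t) (ht2 : t ≤ 2) {l : List (AGen x y n)}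
    (hl : IsPathWord t l) {g : AGen x y n} (hg : 2 ≤ g.rank) (hgl : ¬ IsPathWord t (g :: l)) :
    pathVal k t l * aGen k g = 0 := by
  by_cases hp : endRank t l % 2 = g.rank % 2
  · rw [← aIdem_rank_mul_aGen hg, ← mul_assoc, pathVal_mul_aIdem ht hl, if_neg (by omega), zero_mul]
  · have hle : g.rank ≤ endRank t l := by
      by_contra hlt
      exact hgl ⟨hl, by omega, hp⟩
    cases l with
    | nil => simp only [endRank] at hp hle; omega
    | cons h l => rw [pathVal, mul_assoc, aGen_mul_aGen (hl.two_le ht) hg hp hle, mul_zero]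

variable (k x y n) in
/-- The linear span of all paths ending at the vertex with the parity of `t`. -/
def pathSpan (t : ℕ) : Submodule k (AAlgebra k x y n) :=
  Submodule.span k (pathVal k t '' {l | IsPathWord t l})

lemma pathSpan_mul_aGen {t : ℕ} (ht : 1 ≤ t) (ht2 : t ≤ 2) (g : AGen x y n)
    {u : AAlgebra k x y n} (hu : u ∈ pathSpan k x y n t) : u * aGen k g ∈ pathSpan k x y n t := by
  induction hu using Submodule.span_induction with
  | zero => simp
  | add u v _ _ hu hv => rw [add_mul]; exact add_mem hu hv
  | smul c u _ hu => rw [smul_mul_assoc]; exact Submodule.smul_mem _ _ hu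
  | mem u hu =>
    obtain ⟨l, hl, rfl⟩ := hu
    have hmem : ∀ s, pathVal k t l * aIdem k x y n s ∈ pathSpan k x y n t := fun s => by
      rw [pathVal_mul_aIdem ht hl]
      split_ifs
      · exact Submodule.subset_span ⟨l, hl, rfl⟩
      · exact zero_mem _
    have harr : 2 ≤ g.rank → pathVal k t l * aGen k g ∈ pathSpan k x y n t := fun hg => by
      by_cases hgl : IsPathWord t (g :: l)
      · exact Submodule.subset_span ⟨g :: l, hgl, rfl⟩
      · rw [pathVal_mul_aGen ht ht2 hl hg hgl]
        exact zero_mem _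
    cases g with
    | e1 => exact hmem 0
    | e2 => exact hmem 1
    | a i j => exact harr (by simp [AGen.rank])
    | b i j => exact harr (by simp [AGen.rank])

lemma pathSpan_mul {t : ℕ} (ht : 1 ≤ t) (ht2 : t ≤ 2) (r u : AAlgebra k x y n)
    (hu : u ∈ pathSpan k x y n t) : u * r ∈ pathSpan k x y n t := by
  obtain ⟨r, rfl⟩ := aProj_surjective r
  induction r using FreeAlgebra.induction generalizing u with
  | grade0 c =>
    rw [AlgHom.commutes, ← Algebra.commutes, ← Algebra.smul_def]
    exact Submodule.smul_mem _ _ hu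
  | grade1 g => exact pathSpan_mul_aGen ht ht2 g hu
  | mul a b ha hb => rw [map_mul, ← mul_assoc]; exact hb _ (ha _ hu)
  | add a b ha hb => rw [map_add, mul_add]; exact add_mem (ha _ hu) (hb _ hu)

/-- The hypothesis `hs` says that no path is excluded by the bound `s` on its first arrow. -/
lemma cornerSpace_eq_span {t s : ℕ} (ht : 1 ≤ t) (ht2 : t ≤ 2)
    (hs : ∀ l : List (AGen x y n), IsPathWord t l → endRank t l % 2 = s % 2 → endRank t l ≤ s) :
    cornerSpace k (aIdem k x y n t) (aIdem k x y n s) =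
      Submodule.span k (Set.range fun l : pathWords x y n t s => pathVal k t l.1) := by
  apply le_antisymm
  · rintro _ ⟨r, rfl⟩
    have h : aIdem k x y n t * r ∈ pathSpan k x y n t :=
      pathSpan_mul ht ht2 r _ (Submodule.subset_span ⟨[], trivial, rfl⟩)
    simp only [LinearMap.comp_apply, LinearMap.mulLeft_apply, LinearMap.mulRight_apply]
    rw [← mul_assoc]
    generalize aIdem k x y n t * r = w at h ⊢
    induction h using Submodule.span_induction with
    | zero => simp
    | add u v _ _ hu hv => rw [add_mul]; exact add_mem hu hv
    | smul c u _ hu => rw [smul_mul_assoc]; exact Submodule.smul_mem _ _ hu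
    | mem u hu =>
      obtain ⟨l, hl, rfl⟩ := hu
      rw [pathVal_mul_aIdem ht hl]
      split_ifs with h
      · exact Submodule.subset_span ⟨⟨l, hl, hs l hl h, h⟩, rfl⟩
      · exact zero_mem _
  · rw [Submodule.span_le]
    rintro _ ⟨⟨l, hl, -, h⟩, rfl⟩
    refine ⟨pathVal k t l, ?_⟩
    simp [pathVal_mul_aIdem ht hl, h, aIdem_mul_pathVal]

/-! ### The paths are linearly independent -/

variable (k) in
/-- The effect of right multiplication by a generator on a list of arrows `l`, where `t` encodes the
vertex at which `l` ends: a trivial path fixes or kills `l`, and an arrow is appended to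
`l` when the rank goes up and changes parity, and kills `l` otherwise. -/
def wordActFun (t : ℕ) (g : AGen x y n) (l : List (AGen x y n)) : List (AGen x y n) →₀ k :=
  match g with
  | .e1 => if endRank t l % 2 = 0 then Finsupp.single l 1 else 0
  | .e2 => if endRank t l % 2 = 1 then Finsupp.single l 1 else 0
  | g => if endRank t l < g.rank ∧ endRank t l % 2 ≠ g.rank % 2 then
      Finsupp.single (g :: l) 1 else 0

variable (k) in
/-- The linear extension of `wordActFun`.  As this is a right action, it takes values in the opposite
of the endomorphism ring. -/
def wordAct (t : ℕ) (g : AGen x y n) : (Module.End k (List (AGen x y n) →₀ k))ᵐᵒᵖ :=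
  MulOpposite.op (Finsupp.linearCombination k (wordActFun k t g))

lemma wordAct_single (t : ℕ) (g : AGen x y n) (l : List (AGen x y n)) :
    (wordAct k t g).unop (Finsupp.single l 1) = wordActFun k t g l := by
  simp [wordAct]

lemma wordAct_rel (t : ℕ) {u v : FreeAlgebra k (AGen x y n)} (h : ARel k x y n u v) :
    FreeAlgebra.lift k (wordAct k t) u = FreeAlgebra.lift k (wordAct k t) v := by
  apply MulOpposite.unop_injective
  refine Finsupp.lhom_ext' fun l => LinearMap.ext_ring ?_
  cases h <;>
    simp only [map_mul, map_add, map_one, map_zero, FreeAlgebra.lift_ι_apply, MulOpposite.unop_mul,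
      MulOpposite.unop_add, MulOpposite.unop_one, MulOpposite.unop_zero, LinearMap.comp_apply,
      Finsupp.lsingle_apply, Module.End.mul_apply, LinearMap.add_apply, Module.End.one_apply,
      LinearMap.zero_apply, wordAct_single, wordActFun]
  case sum =>
    rcases Nat.mod_two_eq_zero_or_one (endRank t l) with h | h <;> simp [h]
  all_goals
    split_ifs <;>
    simp only [map_zero, wordAct_single, wordActFun] <;>
    (try split_ifs) <;>
    first
      | rfl
      | (simp only [endRank, AGen.rank] at *; omega)

variable (k x y n) in
/-- The right action of `A_n(x,y)` on the space spanned by lists of arrows. -/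
def wordRep (t : ℕ) : AAlgebra k x y n →ₐ[k] (Module.End k (List (AGen x y n) →₀ k))ᵐᵒᵖ :=
  RingQuot.liftAlgHom k ⟨FreeAlgebra.lift k (wordAct k t), fun _ _ h => wordAct_rel t h⟩

lemma wordRep_aGen (t : ℕ) (g : AGen x y n) : wordRep k x y n t (aGen k g) = wordAct k t g := by
  rw [wordRep, aGen]
  erw [RingQuot.liftAlgHom_mkAlgHom_apply]
  simp

lemma wordRep_pathVal {t : ℕ} (ht : 1 ≤ t) : ∀ {l : List (AGen x y n)}, IsPathWord t l →
    (wordRep k x y n t (pathVal k t l)).unop (Finsupp.single [] 1) = Finsupp.single l 1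
  | [], _ => by
    rw [pathVal, aIdem, wordRep_aGen, wordAct_single]
    rcases Nat.mod_two_eq_zero_or_one t with h | h <;> simp [h, wordActFun, endRank]
  | g :: l, h => by
    rw [pathVal, map_mul, MulOpposite.unop_mul, Module.End.mul_apply, wordRep_pathVal ht h.1,
      wordRep_aGen, wordAct_single]
    have hg := h.two_le ht
    cases g with
    | e1 => simp [AGen.rank] at hg
    | e2 => simp [AGen.rank] at hg
    | a i j => exact if_pos h.2
    | b i j => exact if_pos h.2

lemma linearIndependent_pathVal {t : ℕ} (ht : 1 ≤ t) (s : ℕ) :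
    LinearIndependent k (fun l : pathWords x y n t s => pathVal k t l.1) := by
  let φ : AAlgebra k x y n →ₗ[k] (List (AGen x y n) →₀ k) :=
    (LinearMap.applyₗ (Finsupp.single [] 1)) ∘ₗ
      (MulOpposite.opLinearEquiv k).symm.toLinearMap ∘ₗ (wordRep k x y n t).toLinearMap
  refine LinearIndependent.of_comp φ ?_
  have h : φ ∘ (fun l : pathWords x y n t s => pathVal k t l.1) =
      (fun l : List (AGen x y n) => Finsupp.single l (1 : k)) ∘ Subtype.val := by
    funext l
    exact wordRep_pathVal ht l.2.1
  rw [h]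
  exact (Finsupp.linearIndependent_single_one k _).comp _ Subtype.val_injective

/-! ### The Cartan matrix -/

lemma endRank_le {m t : ℕ} (ht2 : t ≤ 2) (hm : 1 ≤ m) (l : List (AGen x y (2 * m))) :
    endRank t l ≤ 2 * m + 1 := by
  cases l with
  | nil => simp only [endRank]; omega
  | cons g l => cases g <;> simp only [endRank, AGen.rank] <;> omega

lemma finrank_cornerSpace {m t s : ℕ} (ht : 1 ≤ t) (ht2 : t ≤ 2) (hm : 1 ≤ m)
    (hs : 2 * m ≤ s) (hs2 : s ≤ 2 * m + 1) :
    Module.finrank k (cornerSpace k (aIdem k x y (2 * m) t) (aIdem k x y (2 * m) s)) =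
      (pathWords x y (2 * m) t s).ncard := by
  rw [cornerSpace_eq_span ht ht2 fun l _ h => by have := endRank_le ht2 hm l; omega]
  have := (pathWords_finite (x := x) (y := y) (m := m) t s hs2).fintype
  rw [finrank_span_eq_card (linearIndependent_pathVal ht s), ← Nat.card_eq_fintype_card,
    Nat.card_coe_set_eq]

end CartanProof

/-- STATEMENT 8: the Cartan matrix of `A_{2m}(x,y)` for `m ≥ 1`. -/
theorem AAlgebra_cartan_even (k : Type) [Field k] (x y : ℕ → ℕ)
    (hx : ∀ i, 0 < x i) (hy : ∀ i, 0 < y i) (m : ℕ) (hm : 1 ≤ m) :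
    Module.finrank k (cornerSpace k (Ae1 k x y (2 * m)) (Ae1 k x y (2 * m))) =
      genFib y (shiftSeq x) (2 * m - 1) ∧
    Module.finrank k (cornerSpace k (Ae1 k x y (2 * m)) (Ae2 k x y (2 * m))) =
      genFib y (shiftSeq x) (2 * m) ∧
    Module.finrank k (cornerSpace k (Ae2 k x y (2 * m)) (Ae1 k x y (2 * m))) =
      genFib x y (2 * m) ∧
    Module.finrank k (cornerSpace k (Ae2 k x y (2 * m)) (Ae2 k x y (2 * m))) =
      genFib x y (2 * m + 1) := by
  have h0 : Ae1 k x y (2 * m) = aIdem k x y (2 * m) (2 * m) := by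
    simp only [aIdem, Nat.mul_mod_right, if_true]
    rfl
  have h1 : Ae2 k x y (2 * m) = aIdem k x y (2 * m) (2 * m + 1) := by
    rw [aIdem, if_neg (by omega)]
    rfl
  have h0' : Ae1 k x y (2 * m) = aIdem k x y (2 * m) 2 := h0.trans (aIdem_congr (by omega))
  have h1' : Ae2 k x y (2 * m) = aIdem k x y (2 * m) 1 := h1.trans (aIdem_congr (by omega))
  refine ⟨?_, ?_, ?_, ?_⟩
  · have h := finrank_cornerSpace (k := k) (x := x) (y := y) one_le_two le_rfl hm le_rfl
      (Nat.le_succ (2 * m))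
    rw [← h0, ← h0'] at h
    rw [h, ← ncard_pathWords_two (m := m) (2 * m - 1) (by omega), Nat.sub_add_cancel (by omega)]
  · rw [h0', h1, finrank_cornerSpace one_le_two le_rfl hm (by omega) le_rfl,
      ncard_pathWords_two (2 * m) le_rfl]
  · rw [h1', h0, finrank_cornerSpace le_rfl one_le_two hm le_rfl (by omega),
      ncard_pathWords_one (2 * m) (by omega)]
  · have h := finrank_cornerSpace (k := k) (x := x) (y := y) le_rfl one_le_two hm
      (Nat.le_succ (2 * m)) le_rfl
    rw [← h1, ← h1'] at h
    rw [h, ncard_pathWords_one (2 * m + 1) le_rfl]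

end
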